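/- Let f be a Rademacher random multiplicative function and suppose 0 < ε < 1/4. For ℓ ≥ 2 define the event C_ℓ := { sup over indices i with X_{ℓ−1} < x_{i−1} ≤ X_ℓ of (1/(√(x_{i−1})·R(x_{i−1}))) · sup_{x_{i−1} < x ≤ x_i} |∑_{n ≤ x_{i−1}, √(x_{i−1}) < P(n) ≤ √x} f(n)| > 2 }. There exists a constant C = C(ε) > 0 such that for all sufficiently large ℓ (in terms of ε), ℙ(C_ℓ) ≤ C · 2^{−(ℓ−1)^K · (1−4ε)/ε}. -/

import Mathlib

/-!
Fix `y = x_{i-1}` and let `S_k` be the sum of `f n` over `n ≤ y` with `√y < P(n) ≤ k`. Since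
`P(n) > √y`, each such `n` is `p m` with `p = P(n)` prime and `m ≤ y / p < p`. Hence `S_k - S_{k-1}`
is either zero or `f(k)` times a sum of values of `f` determined by the primes below `k`, so `S` is
a martingale. The fourth moment of `∑_{m ≤ N} f(m)` is at most the number of quadruples in
`[1, N]` of the form `(g p q, g r s, k p r, k q s)`, which is `O((N log N)²)`. By orthogonality of
the increments, `‖S‖₄²` is at most `4 ∑_k ‖S_k - S_{k-1}‖₄²`, where `k` runs over the
`O(√y i^{ε-1})` integers between `√x_{i-1}` and `√x_i`. The maximal inequality for the submartingale
`S⁴` then bounds the probability for a single `i` by `O(i^{4ε-2})`, which is summed over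
`i > 2^{(ℓ-1)^K/ε}`.
-/

open MeasureTheory ProbabilityTheory

noncomputable section

/-- The largest prime factor of `n`, with `P 1 = 1` (and `P 0 = 1`). -/
def Pfac (n : ℕ) : ℕ := if n ≤ 1 then 1 else n.primeFactors.sup id

/-- A Rademacher random multiplicative function. -/
structure IsRademacherRMF {Ω : Type*} [MeasurableSpace Ω] (μ : Measure Ω)
    (f : Ω → ℕ → ℝ) : Prop where
  meas : ∀ n : ℕ, Measurable fun ω => f ω n
  indep : iIndepFun (m := fun _ : Nat.Primes => (inferInstance : MeasurableSpace ℝ))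
    (fun (p : Nat.Primes) (ω : Ω) => f ω (p : ℕ)) μ
  prob_one : ∀ p : ℕ, p.Prime → μ {ω | f ω p = 1} = 1 / 2
  prob_neg_one : ∀ p : ℕ, p.Prime → μ {ω | f ω p = -1} = 1 / 2
  eq_zero_of_not_squarefree : ∀ (ω : Ω) (n : ℕ), ¬Squarefree n → f ω n = 0
  eq_prod_of_squarefree : ∀ (ω : Ω) (n : ℕ), Squarefree n →
    f ω n = ∏ p ∈ n.primeFactors, f ω p

/-- The test points `x_i := ⌊exp(i^ε)⌋`. -/
def testPoint (ε : ℝ) (i : ℕ) : ℕ := ⌊Real.exp ((i : ℝ) ^ ε)⌋₊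

/-- `X_ℓ := exp(2^{ℓ^K})` with `K = 1/(4ε)` (here `ℓ` is a real number). -/
def Xpt (ε ℓ : ℝ) : ℝ := Real.exp ((2 : ℝ) ^ (ℓ ^ (1 / (4 * ε))))

/-- `R(x) := (log log x)^{1/4+ε}`. -/
def Rbd (ε x : ℝ) : ℝ := Real.log (Real.log x) ^ ((1 : ℝ) / 4 + ε)

section FourthMoment

variable {Ω : Type*} {m₀ : MeasurableSpace Ω} {μ : Measure Ω}

lemma memLp_two_mul_of_memLp_four {X Y : Ω → ℝ} (hX : MemLp X 4 μ) (hY : MemLp Y 4 μ) :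
    MemLp (fun ω => X ω * Y ω) 2 μ := by
  have : ENNReal.HolderTriple 4 4 2 := ⟨by
    rw [← two_mul, show (4 : ENNReal) = 2 * 2 by norm_num,
      ENNReal.mul_inv (Or.inl two_ne_zero) (Or.inl ENNReal.ofNat_ne_top), ← mul_assoc,
      ENNReal.mul_inv_cancel two_ne_zero ENNReal.ofNat_ne_top, one_mul]⟩
  exact hY.mul' hX

lemma integrable_mul_mul_mul_of_memLp_four {X Y Z W : Ω → ℝ} (hX : MemLp X 4 μ)
    (hY : MemLp Y 4 μ) (hZ : MemLp Z 4 μ) (hW : MemLp W 4 μ) :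
    Integrable (fun ω => X ω * Y ω * (Z ω * W ω)) μ :=
  (memLp_two_mul_of_memLp_four hX hY).integrable_mul (memLp_two_mul_of_memLp_four hZ hW)

lemma integral_sq_mul_sq_le {X Y : Ω → ℝ} (hX : MemLp X 4 μ) (hY : MemLp Y 4 μ) {a b : ℝ}
    (ha : 0 ≤ a) (hb : 0 ≤ b) (hXa : ∫ ω, X ω ^ 4 ∂μ ≤ a ^ 2) (hYb : ∫ ω, Y ω ^ 4 ∂μ ≤ b ^ 2) :
    ∫ ω, X ω ^ 2 * Y ω ^ 2 ∂μ ≤ a * b := by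
  have memLp_sq {Z : Ω → ℝ} (hZ : MemLp Z 4 μ) : MemLp (fun ω => Z ω ^ 2) (ENNReal.ofReal 2) μ := by
    simpa only [sq, ENNReal.ofReal_ofNat] using memLp_two_mul_of_memLp_four hZ hZ
  have sqrt_le {Z : Ω → ℝ} {c : ℝ} (hc : 0 ≤ c) (hZ : ∫ ω, Z ω ^ 4 ∂μ ≤ c ^ 2) :
      (∫ ω, (Z ω ^ 2) ^ (2 : ℝ) ∂μ) ^ (1 / (2 : ℝ)) ≤ c := by
    rw [← Real.sqrt_eq_rpow]
    refine (Real.sqrt_le_left hc).2 ?_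
    simpa only [Real.rpow_two, ← pow_mul] using hZ
  calc ∫ ω, X ω ^ 2 * Y ω ^ 2 ∂μ
      ≤ (∫ ω, (X ω ^ 2) ^ (2 : ℝ) ∂μ) ^ (1 / (2 : ℝ)) *
          (∫ ω, (Y ω ^ 2) ^ (2 : ℝ) ∂μ) ^ (1 / (2 : ℝ)) :=
        integral_mul_le_Lp_mul_Lq_of_nonneg .two_two (ae_of_all _ fun ω => sq_nonneg (X ω))
          (ae_of_all _ fun ω => sq_nonneg (Y ω)) (memLp_sq hX) (memLp_sq hY)
    _ ≤ a * b := by gcongr <;> exact sqrt_le ‹_› ‹_›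

lemma add_pow_four_le (x d : ℝ) :
    (x + d) ^ 4 ≤ x ^ 4 + 4 * (x ^ 3 * d) + 8 * (x ^ 2 * d ^ 2) + 3 * d ^ 4 := by
  -- AM-GM: `4 x d³ ≤ 2 x² d² + 2 d⁴`. The term `x³ d` stays, as it has mean zero for martingales.
  have : 0 ≤ 2 * (d * (x - d)) ^ 2 := by positivity
  linarith

lemma integral_add_pow_four_le {X D : Ω → ℝ} (hX : MemLp X 4 μ) (hD : MemLp D 4 μ) {a b : ℝ}
    (ha : 0 ≤ a) (hb : 0 ≤ b) (hXa : ∫ ω, X ω ^ 4 ∂μ ≤ a ^ 2) (hDb : ∫ ω, D ω ^ 4 ∂μ ≤ b ^ 2)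
    (hXD : ∫ ω, X ω ^ 3 * D ω ∂μ = 0) :
    ∫ ω, (X ω + D ω) ^ 4 ∂μ ≤ (a + 4 * b) ^ 2 := by
  have int_pow {Z : Ω → ℝ} (hZ : MemLp Z 4 μ) : Integrable (fun ω => Z ω ^ 4) μ :=
    (integrable_mul_mul_mul_of_memLp_four hZ hZ hZ hZ).congr (ae_of_all _ fun ω => by ring)
  have int_XXXD : Integrable (fun ω => X ω ^ 3 * D ω) μ :=
    (integrable_mul_mul_mul_of_memLp_four hX hX hX hD).congr (ae_of_all _ fun ω => by ring)
  have int_XXDD : Integrable (fun ω => X ω ^ 2 * D ω ^ 2) μ :=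
    (integrable_mul_mul_mul_of_memLp_four hX hX hD hD).congr (ae_of_all _ fun ω => by ring)
  have : Integrable (fun ω => X ω ^ 4) μ := int_pow hX
  have int_D := int_pow hD
  calc ∫ ω, (X ω + D ω) ^ 4 ∂μ
      ≤ ∫ ω, X ω ^ 4 + 4 * (X ω ^ 3 * D ω) + 8 * (X ω ^ 2 * D ω ^ 2) + 3 * D ω ^ 4 ∂μ :=
        integral_mono (int_pow (hX.add hD)) (by fun_prop) fun ω => add_pow_four_le _ _
    _ = ∫ ω, X ω ^ 4 ∂μ + 8 * ∫ ω, X ω ^ 2 * D ω ^ 2 ∂μ + 3 * ∫ ω, D ω ^ 4 ∂μ := by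
        rw [integral_add (by fun_prop) (by fun_prop), integral_add (by fun_prop) (by fun_prop),
          integral_add (by fun_prop) (by fun_prop)]
        simp only [integral_const_mul, hXD, mul_zero, add_zero]
    _ ≤ a ^ 2 + 8 * (a * b) + 3 * b ^ 2 := by
        gcongr; exact integral_sq_mul_sq_le hX hD ha hb hXa hDb
    _ ≤ (a + 4 * b) ^ 2 := by linarith [sq_nonneg b]

variable [IsFiniteMeasure μ] {𝓕 : Filtration ℕ m₀} {S : ℕ → Ω → ℝ}

lemma integral_mul_martingale_sub_eq_zero (hS : Martingale S 𝓕 μ) {i j : ℕ} (hij : i ≤ j)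
    {Z : Ω → ℝ} (hZ : StronglyMeasurable[𝓕 i] Z)
    (hint : Integrable (Z * (S j - S i)) μ) :
    ∫ ω, Z ω * (S j ω - S i ω) ∂μ = 0 := by
  have hdiff : μ[S j - S i | 𝓕 i] =ᵐ[μ] 0 := by
    filter_upwards [condExp_sub (hS.integrable j) (hS.integrable i) (𝓕 i),
      hS.condExp_ae_eq hij, hS.condExp_ae_eq (le_refl i)] with ω hsub hj hi
    simp [hsub, hj, hi]
  calc ∫ ω, Z ω * (S j ω - S i ω) ∂μ
      = ∫ ω, (μ[Z * (S j - S i) | 𝓕 i]) ω ∂μ := (integral_condExp (𝓕.le i)).symm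
    _ = ∫ _, 0 ∂μ := by
        refine integral_congr_ae ?_
        filter_upwards [condExp_mul_of_stronglyMeasurable_left hZ hint
          ((hS.integrable j).sub (hS.integrable i)), hdiff] with ω hpull hzero
        simp [hpull, hzero]
    _ = 0 := integral_zero _ _

lemma integral_martingale_pow_four_le (hS : Martingale S 𝓕 μ) (hS4 : ∀ k, MemLp (S k) 4 μ)
    (hS0 : S 0 = 0) {b : ℕ → ℝ} (hb : ∀ k, 0 ≤ b k)
    (hSb : ∀ k, ∫ ω, (S (k + 1) ω - S k ω) ^ 4 ∂μ ≤ b k ^ 2) (n : ℕ) :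
    ∫ ω, S n ω ^ 4 ∂μ ≤ (4 * ∑ k ∈ Finset.range n, b k) ^ 2 := by
  induction n with
  | zero => simp [hS0]
  | succ n ih =>
    have hD4 : MemLp (S (n + 1) - S n) 4 μ := (hS4 (n + 1)).sub (hS4 n)
    have horth : ∫ ω, S n ω ^ 3 * (S (n + 1) ω - S n ω) ∂μ = 0 :=
      integral_mul_martingale_sub_eq_zero hS n.le_succ ((hS.stronglyMeasurable n).pow 3) <|
        (integrable_mul_mul_mul_of_memLp_four (hS4 n) (hS4 n) (hS4 n) hD4).congr
          (ae_of_all _ fun ω => by simp only [Pi.mul_apply, Pi.sub_apply]; ring)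
    have hstep := integral_add_pow_four_le (hS4 n) hD4
      (mul_nonneg zero_le_four (Finset.sum_nonneg fun k _ => hb k)) (hb n) ih (hSb n) horth
    simpa only [Pi.sub_apply, add_sub_cancel, Finset.sum_range_succ, mul_add] using hstep

lemma submartingale_martingale_pow (hS : Martingale S 𝓕 μ) {p : ℕ} (hp : Even p)
    (hint : ∀ k, Integrable (fun ω => S k ω ^ p) μ) :
    Submartingale (fun k ω => S k ω ^ p) 𝓕 μ := by
  refine submartingale_nat (fun k => (hS.stronglyMeasurable k).pow p) hint fun k => ?_
  filter_upwards [hS.condExp_ae_eq k.le_succ, hp.convexOn_pow.map_condExp_le_univ (𝓕.le k)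
    (continuous_pow p).lowerSemicontinuous (hS.integrable (k + 1)) (hint (k + 1))] with ω heq hle
  rw [Function.comp_apply, heq] at hle
  exact hle

lemma measure_exists_le_abs_martingale_le (hS : Martingale S 𝓕 μ) {p : ℕ} (hp : Even p)
    (hint : ∀ k, Integrable (fun ω => S k ω ^ p) μ) {r : ℝ} (hr : 0 < r) (n : ℕ) :
    μ {ω | ∃ k ≤ n, r ≤ |S k ω|} ≤ ENNReal.ofReal ((∫ ω, S n ω ^ p ∂μ) / r ^ p) := by
  have hrp : 0 < r ^ p := by positivity
  have hsub : {ω | ∃ k ≤ n, r ≤ |S k ω|} ⊆ {ω | ((r ^ p).toNNReal : ℝ) ≤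
      (Finset.range (n + 1)).sup' Finset.nonempty_range_add_one fun k => S k ω ^ p} := by
    rintro ω ⟨k, hk, hrk⟩
    simp only [Set.mem_ofPred_eq, Finset.le_sup'_iff, Real.coe_toNNReal _ hrp.le]
    refine ⟨k, Finset.mem_range_succ_iff.2 hk, ?_⟩
    rw [← hp.pow_abs (S k ω)]
    gcongr
  rw [ENNReal.ofReal_div_of_pos hrp, ENNReal.le_div_iff_mul_le (by simp [hrp]) (by simp), mul_comm]
  calc ENNReal.ofReal (r ^ p) * μ {ω | ∃ k ≤ n, r ≤ |S k ω|}
      ≤ ENNReal.ofReal (r ^ p) * μ _ := by gcongr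
    _ ≤ ENNReal.ofReal (∫ ω in _, S n ω ^ p ∂μ) :=
        maximal_ineq (submartingale_martingale_pow hS hp hint) (fun k ω => hp.pow_nonneg _) n
    _ ≤ ENNReal.ofReal (∫ ω, S n ω ^ p ∂μ) := ENNReal.ofReal_le_ofReal <|
        setIntegral_le_integral (hint n) (ae_of_all _ fun ω => hp.pow_nonneg _)

end FourthMoment

section SquareQuadruples

open Finset

/-- The product of the cofactors of `gcd a b`. For squarefree `a` and `b` it is the squarefree
representative of `a * b` modulo squares, so that `a * b * c * d` is a perfect square exactly when
`reducedMul a b = reducedMul c d`. -/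
def reducedMul (a b : ℕ) : ℕ := a / a.gcd b * (b / a.gcd b)

/-- The quadruples `((a, b), (c, d))` in `[1, N]` with `reducedMul a b = reducedMul c d`; they carry
the fourth moment of the partial sums of a Rademacher random multiplicative function. -/
def squareQuadruples (N : ℕ) : Finset ((ℕ × ℕ) × (ℕ × ℕ)) :=
  ((Icc 1 N ×ˢ Icc 1 N) ×ˢ (Icc 1 N ×ˢ Icc 1 N)).filter fun t =>
    reducedMul t.1.1 t.1.2 = reducedMul t.2.1 t.2.2

lemma exists_parametrization_of_reducedMul_eq {a b c d : ℕ} (ha : 0 < a)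
    (h : reducedMul a b = reducedMul c d) :
    ∃ p q r s g k : ℕ,
      a = g * (p * q) ∧ b = g * (r * s) ∧ c = k * (p * r) ∧ d = k * (q * s) := by
  obtain ⟨p, q, ⟨r, hr⟩, ⟨s, hs⟩, hpq⟩ := exists_dvd_and_dvd_of_dvd_mul (Dvd.intro _ h)
  have hb : b / a.gcd b = r * s := by
    refine Nat.eq_of_mul_eq_mul_left
      (Nat.div_pos (Nat.gcd_le_left b ha) (Nat.gcd_pos_of_pos_left b ha)) ?_
    calc a / a.gcd b * (b / a.gcd b) = c / c.gcd d * (d / c.gcd d) := h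
      _ = a / a.gcd b * (r * s) := by rw [hr, hs, hpq]; ring
  refine ⟨p, q, r, s, a.gcd b, c.gcd d, ?_, ?_, ?_, ?_⟩
  · rw [← hpq, Nat.mul_div_cancel' (Nat.gcd_dvd_left a b)]
  · rw [← hb, Nat.mul_div_cancel' (Nat.gcd_dvd_right a b)]
  · rw [← hr, Nat.mul_div_cancel' (Nat.gcd_dvd_left c d)]
  · rw [← hs, Nat.mul_div_cancel' (Nat.gcd_dvd_right c d)]

lemma sum_one_div_sqrt_le (n : ℕ) : ∑ s ∈ Icc 1 n, 1 / √(s : ℝ) ≤ 2 * √n := by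
  induction n with
  | zero => simp
  | succ n ih =>
    have hpos : 0 < √((n + 1 : ℕ) : ℝ) := by positivity
    have hstep : 1 / √((n + 1 : ℕ) : ℝ) ≤ 2 * √((n + 1 : ℕ) : ℝ) - 2 * √(n : ℝ) := by
      rw [div_le_iff₀ hpos]
      have hsucc : √((n + 1 : ℕ) : ℝ) ^ 2 = √(n : ℝ) ^ 2 + 1 := by
        rw [Real.sq_sqrt (by positivity), Real.sq_sqrt (by positivity), Nat.cast_succ]
      linarith [sq_nonneg (√((n + 1 : ℕ) : ℝ) - √n)]
    rw [sum_Icc_succ_top (by lia)]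
    linarith

/-- A symmetric kernel on the positive integers whose double sum over `[1, N]` is only logarithmic;
its products dominate the number of quadruples with given coprime parts. -/
def sqrtKernel (p s : ℕ) : ℝ := 1 / ((max p s : ℕ) * √(p * s : ℝ))

lemma sqrtKernel_nonneg (p s : ℕ) : 0 ≤ sqrtKernel p s := by unfold sqrtKernel; positivity

lemma sqrtKernel_comm (p s : ℕ) : sqrtKernel p s = sqrtKernel s p := by
  rw [sqrtKernel, sqrtKernel, max_comm, mul_comm (p : ℝ)]

lemma sum_sqrtKernel_le_two_div (p : ℕ) : ∑ s ∈ Icc 1 p, sqrtKernel p s ≤ 2 * (p : ℝ)⁻¹ := by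
  calc ∑ s ∈ Icc 1 p, sqrtKernel p s
      = 1 / (p * √p) * ∑ s ∈ Icc 1 p, 1 / √(s : ℝ) := by
        rw [mul_sum]
        refine sum_congr rfl fun s hs => ?_
        rw [sqrtKernel, max_eq_left (mem_Icc.1 hs).2, Real.sqrt_mul p.cast_nonneg, ← mul_assoc,
          ← one_div_mul_one_div]
    _ ≤ 1 / (p * √p) * (2 * √p) := by gcongr; exact sum_one_div_sqrt_le p
    _ = 2 * (p : ℝ)⁻¹ := by
        rcases p.eq_zero_or_pos with rfl | hp
        · simp
        · field_simp

lemma sum_sum_sqrtKernel_le (N : ℕ) :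
    ∑ p ∈ Icc 1 N, ∑ s ∈ Icc 1 N, sqrtKernel p s ≤ 4 * (1 + Real.log N) := by
  have hhalf : ∑ p ∈ Icc 1 N, ∑ s ∈ Icc 1 N, (if s ≤ p then sqrtKernel p s else 0) ≤
      2 * (1 + Real.log N) := by
    calc ∑ p ∈ Icc 1 N, ∑ s ∈ Icc 1 N, (if s ≤ p then sqrtKernel p s else 0)
        = ∑ p ∈ Icc 1 N, ∑ s ∈ Icc 1 p, sqrtKernel p s := by
          refine sum_congr rfl fun p hp => ?_
          rw [← sum_filter]
          congr 1
          ext s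
          simp only [mem_filter, mem_Icc] at hp ⊢
          lia
      _ ≤ ∑ p ∈ Icc 1 N, 2 * (p : ℝ)⁻¹ := sum_le_sum fun p _ => sum_sqrtKernel_le_two_div p
      _ = 2 * (harmonic N : ℝ) := by rw [harmonic_eq_sum_Icc, ← mul_sum]; push_cast; rfl
      _ ≤ 2 * (1 + Real.log N) := by gcongr; exact harmonic_le_one_add_log N
  calc ∑ p ∈ Icc 1 N, ∑ s ∈ Icc 1 N, sqrtKernel p s
      ≤ ∑ p ∈ Icc 1 N, ∑ s ∈ Icc 1 N, ((if s ≤ p then sqrtKernel p s else 0) +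
          (if p ≤ s then sqrtKernel s p else 0)) := by
        refine sum_le_sum fun p _ => sum_le_sum fun s _ => ?_
        have := sqrtKernel_nonneg p s
        rw [← sqrtKernel_comm p s]
        split_ifs <;> linarith
    _ = 2 * ∑ p ∈ Icc 1 N, ∑ s ∈ Icc 1 N, (if s ≤ p then sqrtKernel p s else 0) := by
        simp only [sum_add_distrib]
        rw [sum_comm (f := fun p s => if p ≤ s then sqrtKernel s p else 0), ← two_mul]
    _ ≤ 4 * (1 + Real.log N) := by linarith

lemma max_sq_mul_le (p q r s : ℕ) :
    max p s ^ 2 * (q * r) ≤ max (p * q) (r * s) * max (p * r) (q * s) := by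
  rcases max_choice p s with h | h <;> rw [h]
  · calc p ^ 2 * (q * r) = p * q * (p * r) := by ring
      _ ≤ _ := Nat.mul_le_mul (le_max_left _ _) (le_max_left _ _)
  · calc s ^ 2 * (q * r) = r * s * (q * s) := by ring
      _ ≤ _ := Nat.mul_le_mul (le_max_right _ _) (le_max_right _ _)

lemma one_div_max_mul_max_le {p q r s : ℕ} (hp : 0 < p) (hq : 0 < q) (hr : 0 < r) (hs : 0 < s) :
    1 / ((max (p * q) (r * s) * max (p * r) (q * s) : ℕ) : ℝ) ≤
      sqrtKernel p s * sqrtKernel q r := by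
  set A : ℕ := max (p * q) (r * s) * max (p * r) (q * s) with hA
  have hps : max p s ^ 2 * (q * r) ≤ A := max_sq_mul_le p q r s
  have hqr : max q r ^ 2 * (p * s) ≤ A := by
    simpa only [hA, mul_comm, max_comm] using max_sq_mul_le q p s r
  have : 0 < max p s := lt_max_of_lt_left hp
  have : 0 < max q r := lt_max_of_lt_left hq
  rw [sqrtKernel, sqrtKernel, one_div_mul_one_div]
  refine one_div_le_one_div_of_le (by positivity) (le_of_sq_le_sq ?_ (by positivity))
  calc ((max p s : ℕ) * √(p * s : ℝ) * ((max q r : ℕ) * √(q * r : ℝ))) ^ 2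
      = ((max p s : ℕ) ^ 2 * √(q * r : ℝ) ^ 2) * ((max q r : ℕ) ^ 2 * √(p * s : ℝ) ^ 2) := by ring
    _ = ((max p s ^ 2 * (q * r) : ℕ) : ℝ) * ((max q r ^ 2 * (p * s) : ℕ) : ℝ) := by
        rw [Real.sq_sqrt (by positivity), Real.sq_sqrt (by positivity)]
        push_cast
        rfl
    _ ≤ (A : ℝ) * A := by gcongr
    _ = (A : ℝ) ^ 2 := (sq _).symm

/-- The quadruples with prescribed cofactors: `g` and `k` play the role of the two gcds. -/
def quadruplesWithCofactors (N p q r s : ℕ) : Finset ((ℕ × ℕ) × (ℕ × ℕ)) :=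
  (Icc 1 (N / max (p * q) (r * s)) ×ˢ Icc 1 (N / max (p * r) (q * s))).image fun (g, k) =>
    ((g * (p * q), g * (r * s)), (k * (p * r), k * (q * s)))

lemma card_quadruplesWithCofactors_le {p q r s : ℕ} (hp : 0 < p) (hq : 0 < q) (hr : 0 < r)
    (hs : 0 < s) (N : ℕ) :
    ((quadruplesWithCofactors N p q r s).card : ℝ) ≤
      N ^ 2 * (sqrtKernel p s * sqrtKernel q r) := by
  calc ((quadruplesWithCofactors N p q r s).card : ℝ)
      ≤ ((N / max (p * q) (r * s) * (N / max (p * r) (q * s)) : ℕ) : ℝ) := by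
        refine Nat.cast_le.2 (card_image_le.trans_eq ?_)
        simp only [card_product, Nat.card_Icc, Nat.add_sub_cancel]
    _ ≤ N / (max (p * q) (r * s) : ℕ) * (N / (max (p * r) (q * s) : ℕ)) := by
        rw [Nat.cast_mul]
        gcongr <;> exact Nat.cast_div_le
    _ = N ^ 2 * (1 / ((max (p * q) (r * s) * max (p * r) (q * s) : ℕ) : ℝ)) := by
        rw [div_mul_div_comm, mul_one_div, sq, Nat.cast_mul]
    _ ≤ N ^ 2 * (sqrtKernel p s * sqrtKernel q r) := by
        gcongr; exact one_div_max_mul_max_le hp hq hr hs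

lemma squareQuadruples_subset (N : ℕ) :
    squareQuadruples N ⊆ ((Icc 1 N ×ˢ Icc 1 N) ×ˢ (Icc 1 N ×ˢ Icc 1 N)).biUnion
      fun t => quadruplesWithCofactors N t.1.1 t.2.1 t.2.2 t.1.2 := by
  rintro ⟨⟨a, b⟩, c, d⟩ ht
  simp only [squareQuadruples, mem_filter, mem_product] at ht
  obtain ⟨⟨⟨ha, hb⟩, hc, hd⟩, hred⟩ := ht
  obtain ⟨p, q, r, s, g, k, rfl, rfl, rfl, rfl⟩ :=
    exists_parametrization_of_reducedMul_eq (mem_Icc.1 ha).1 hred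
  have mem_of_dvd {m n : ℕ} (hn : n ∈ Icc 1 N) (hmn : m ∣ n) : m ∈ Icc 1 N :=
    mem_Icc.2 ⟨Nat.pos_of_dvd_of_pos hmn (mem_Icc.1 hn).1,
      (Nat.le_of_dvd (mem_Icc.1 hn).1 hmn).trans (mem_Icc.1 hn).2⟩
  have mem_Icc_div {m u v : ℕ} (hu : m * u ∈ Icc 1 N) (hv : m * v ∈ Icc 1 N) :
      m ∈ Icc 1 (N / max u v) := by
    have hm := (mem_Icc.1 (mem_of_dvd hu (Nat.dvd_mul_right m u))).1
    have hu' := (mem_Icc.1 (mem_of_dvd hu (Nat.dvd_mul_left u m))).1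
    rw [mem_Icc, Nat.le_div_iff_mul_le (lt_max_of_lt_left hu'), ← Nat.mul_max_mul_left]
    exact ⟨hm, max_le (mem_Icc.1 hu).2 (mem_Icc.1 hv).2⟩
  simp only [mem_biUnion, mem_product, quadruplesWithCofactors, mem_image]
  refine ⟨((p, s), (q, r)), ⟨⟨mem_of_dvd ha ⟨g * q, by ring⟩, mem_of_dvd hb ⟨g * r, by ring⟩⟩,
    mem_of_dvd ha ⟨g * p, by ring⟩, mem_of_dvd hb ⟨g * s, by ring⟩⟩, (g, k),
    ⟨mem_Icc_div ha hb, mem_Icc_div hc hd⟩, rfl⟩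

lemma card_squareQuadruples_le (N : ℕ) :
    ((squareQuadruples N).card : ℝ) ≤ (4 * N * (1 + Real.log N)) ^ 2 := by
  calc ((squareQuadruples N).card : ℝ)
      ≤ ∑ t ∈ (Icc 1 N ×ˢ Icc 1 N) ×ˢ (Icc 1 N ×ˢ Icc 1 N),
          ((quadruplesWithCofactors N t.1.1 t.2.1 t.2.2 t.1.2).card : ℝ) := by
        exact_mod_cast (card_le_card (squareQuadruples_subset N)).trans card_biUnion_le
    _ ≤ ∑ t ∈ (Icc 1 N ×ˢ Icc 1 N) ×ˢ (Icc 1 N ×ˢ Icc 1 N),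
          (N : ℝ) ^ 2 * (sqrtKernel t.1.1 t.1.2 * sqrtKernel t.2.1 t.2.2) := by
        refine sum_le_sum fun t ht => ?_
        simp only [mem_product, mem_Icc] at ht
        exact card_quadruplesWithCofactors_le ht.1.1.1 ht.2.1.1 ht.2.2.1 ht.1.2.1 N
    _ = (N : ℝ) ^ 2 * (∑ p ∈ Icc 1 N, ∑ s ∈ Icc 1 N, sqrtKernel p s) ^ 2 := by
        rw [← mul_sum, sq (∑ p ∈ _, _), ← sum_product', sum_mul_sum, sum_product]
    _ ≤ (N : ℝ) ^ 2 * (4 * (1 + Real.log N)) ^ 2 := by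
        gcongr
        · exact sum_nonneg fun _ _ => sum_nonneg fun _ _ => sqrtKernel_nonneg _ _
        · exact sum_sum_sqrtKernel_le N
    _ = (4 * N * (1 + Real.log N)) ^ 2 := by ring

end SquareQuadruples

section ReducedMul

variable {a b : ℕ}

lemma eq_of_reducedMul_eq_one (h : reducedMul a b = 1) : a = b := by
  obtain ⟨ha, hb⟩ := mul_eq_one.1 h
  rw [← Nat.mul_div_cancel' (Nat.gcd_dvd_left a b), ha, ← hb,
    Nat.mul_div_cancel' (Nat.gcd_dvd_right a b)]

lemma squarefree_reducedMul (ha : Squarefree a) (hb : Squarefree b) :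
    Squarefree (reducedMul a b) :=
  (Nat.squarefree_mul
    (Nat.coprime_div_gcd_div_gcd (Nat.gcd_pos_of_pos_left b ha.ne_zero.bot_lt))).2
    ⟨ha.squarefree_of_dvd (Nat.div_dvd_of_dvd (Nat.gcd_dvd_left a b)),
      hb.squarefree_of_dvd (Nat.div_dvd_of_dvd (Nat.gcd_dvd_right a b))⟩

end ReducedMul

section LargestPrimeFactor

open Finset

variable {n p y : ℕ}

lemma Pfac_mem_primeFactors (hn : 1 < n) : Pfac n ∈ n.primeFactors := by
  obtain ⟨q, hq, hsup⟩ := exists_mem_eq_sup n.primeFactors (Nat.nonempty_primeFactors.2 hn) id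
  rwa [Pfac, if_neg hn.not_ge, hsup]

lemma le_Pfac_of_mem_primeFactors (hp : p ∈ n.primeFactors) : p ≤ Pfac n := by
  rw [Pfac, if_neg (Nat.nonempty_primeFactors.1 ⟨p, hp⟩).not_ge]
  exact le_sup (f := id) hp

lemma Pfac_le_self (hn : 0 < n) : Pfac n ≤ n := by
  rcases Nat.eq_or_lt_of_le (Nat.succ_le_of_lt hn) with rfl | hn'
  · exact le_rfl
  · exact Nat.le_of_mem_primeFactors (Pfac_mem_primeFactors hn')

lemma Pfac_mul_of_lt {m : ℕ} (hp : p.Prime) (hm : 0 < m) (hmp : m < p) : Pfac (p * m) = p := by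
  have hpm : p * m ≠ 0 := mul_ne_zero hp.ne_zero hm.ne'
  have hmem : Pfac (p * m) ∈ (p * m).primeFactors :=
    Pfac_mem_primeFactors (hp.one_lt.trans_le (Nat.le_mul_of_pos_right p hm))
  refine le_antisymm ?_
    (le_Pfac_of_mem_primeFactors (hp.mem_primeFactors (Nat.dvd_mul_right p m) hpm))
  rcases (Nat.prime_of_mem_primeFactors hmem).dvd_mul.1 (Nat.dvd_of_mem_primeFactors hmem)
    with hdvd | hdvd
  · exact Nat.le_of_dvd hp.pos hdvd
  · exact (Nat.le_of_dvd hm hdvd).trans hmp.le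

lemma prime_Pfac_of_sqrt_lt (hn : n ∈ Icc 1 y) (hlt : y.sqrt < Pfac n) : (Pfac n).Prime := by
  obtain ⟨hn1, hny⟩ := mem_Icc.1 hn
  refine Nat.prime_of_mem_primeFactors (Pfac_mem_primeFactors (lt_of_le_of_ne hn1 ?_))
  rintro rfl
  exact (Nat.sqrt_pos.2 hny).not_ge (Nat.lt_one_iff.1 hlt).le

lemma div_lt_of_sqrt_lt (h : y.sqrt < p) : y / p < p := Nat.div_lt_of_lt_mul (Nat.sqrt_lt.1 h)

lemma filter_Pfac_eq (hp : p.Prime) (hy : y.sqrt < p) :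
    (Icc 1 y).filter (fun n => Pfac n = p) = (Icc 1 (y / p)).image (p * ·) := by
  ext n
  simp only [mem_filter, mem_image, mem_Icc]
  constructor
  · rintro ⟨⟨hn, hny⟩, rfl⟩
    have hmem : Pfac n ∈ n.primeFactors := by
      refine Pfac_mem_primeFactors (lt_of_le_of_ne hn ?_)
      rintro rfl
      exact Nat.not_prime_one hp
    exact ⟨n / Pfac n, ⟨Nat.div_pos (Nat.le_of_mem_primeFactors hmem) hp.pos,
      Nat.div_le_div_right hny⟩, Nat.mul_div_cancel' (Nat.dvd_of_mem_primeFactors hmem)⟩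
  · rintro ⟨m, ⟨hm, hmy⟩, rfl⟩
    exact ⟨⟨Nat.mul_pos hp.pos hm, (Nat.mul_le_mul_left p hmy).trans (Nat.mul_div_le y p)⟩,
      Pfac_mul_of_lt hp hm (hmy.trans_lt (div_lt_of_sqrt_lt hy))⟩

/-- The sum of `g` over the integers `n ≤ y` with `√y < P(n) ≤ k`. As a process in `k`, for a random
multiplicative `g`, this is the martingale behind the theorem. The lower cutoff uses `Nat.sqrt`,
which agrees with the real one since `P(n)` is an integer. -/
def largePrimeSum (g : ℕ → ℝ) (y k : ℕ) : ℝ :=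
  ∑ n ∈ (Icc 1 y).filter (fun n => y.sqrt < Pfac n ∧ Pfac n ≤ k), g n

lemma largePrimeSum_zero (g : ℕ → ℝ) (y : ℕ) : largePrimeSum g y 0 = 0 := by
  rw [largePrimeSum, filter_false_of_mem fun n _ => by lia, sum_empty]

lemma largePrimeSum_succ_sub (g : ℕ → ℝ) (y k : ℕ) :
    largePrimeSum g y (k + 1) - largePrimeSum g y k =
      ∑ n ∈ (Icc 1 y).filter (fun n => y.sqrt < Pfac n ∧ Pfac n = k + 1), g n := by
  rw [sub_eq_iff_eq_add, largePrimeSum, largePrimeSum, ← sum_union]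
  · congr 1
    ext n
    simp only [mem_filter, mem_union]
    lia
  · refine disjoint_filter.2 fun n _ => ?_
    lia

lemma largePrimeSum_succ_of_prime (g : ℕ → ℝ) {k : ℕ} (hk : (k + 1).Prime) (hy : y.sqrt < k + 1) :
    largePrimeSum g y (k + 1) - largePrimeSum g y k =
      ∑ m ∈ Icc 1 (y / (k + 1)), g ((k + 1) * m) := by
  rw [largePrimeSum_succ_sub, ← sum_image (f := g) fun a _ b _ h =>
    Nat.eq_of_mul_eq_mul_left k.succ_pos h, ← filter_Pfac_eq hk hy]
  congr 1
  refine filter_congr fun n _ => ?_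
  lia

lemma largePrimeSum_succ_of_not_prime (g : ℕ → ℝ) {k : ℕ}
    (hk : ¬ (y.sqrt < k + 1 ∧ (k + 1).Prime)) :
    largePrimeSum g y (k + 1) - largePrimeSum g y k = 0 := by
  rw [largePrimeSum_succ_sub, filter_false_of_mem, sum_empty]
  rintro n hn ⟨hlt, heq⟩
  exact hk (heq ▸ ⟨hlt, prime_Pfac_of_sqrt_lt hn hlt⟩)

lemma sum_filter_sqrt_eq_largePrimeSum (g : ℕ → ℝ) (y : ℕ) (x : ℝ) :
    ∑ n ∈ (Icc 1 y).filter (fun n => √(y : ℝ) < (Pfac n : ℝ) ∧ (Pfac n : ℝ) ≤ √x), g n =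
      largePrimeSum g y ⌊√x⌋₊ := by
  refine sum_congr (filter_congr fun n _ => ?_) fun _ _ => rfl
  rw [Nat.le_floor_iff (Real.sqrt_nonneg x), ← Real.nat_floor_real_sqrt_eq_nat_sqrt,
    Nat.floor_lt (Real.sqrt_nonneg _)]

end LargestPrimeFactor

namespace IsRademacherRMF

variable {Ω : Type*} [m₀ : MeasurableSpace Ω] {μ : Measure Ω} {f : Ω → ℕ → ℝ}

section Multiplicative

lemma squarefree_of_ne_zero (hf : IsRademacherRMF μ f) {ω : Ω} {n : ℕ} (h : f ω n ≠ 0) :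
    Squarefree n :=
  not_imp_comm.1 (hf.eq_zero_of_not_squarefree ω n) h

lemma mul_of_coprime (hf : IsRademacherRMF μ f) (ω : Ω) {m n : ℕ} (h : m.Coprime n) :
    f ω (m * n) = f ω m * f ω n := by
  by_cases hmn : Squarefree m ∧ Squarefree n
  · rw [hf.eq_prod_of_squarefree ω _ ((Nat.squarefree_mul h).2 hmn),
      hf.eq_prod_of_squarefree ω m hmn.1, hf.eq_prod_of_squarefree ω n hmn.2,
      h.primeFactors_mul, Finset.prod_union h.disjoint_primeFactors]
  · rw [hf.eq_zero_of_not_squarefree ω _ (mt (Nat.squarefree_mul h).1 hmn)]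
    by_contra! hne
    exact hmn ⟨hf.squarefree_of_ne_zero (left_ne_zero_of_mul hne.symm),
      hf.squarefree_of_ne_zero (right_ne_zero_of_mul hne.symm)⟩

lemma sum_mul_of_sqrt_lt (hf : IsRademacherRMF μ f) (ω : Ω) {p y : ℕ} (hp : p.Prime)
    (hy : y.sqrt < p) :
    ∑ m ∈ Finset.Icc 1 (y / p), f ω (p * m) = f ω p * ∑ m ∈ Finset.Icc 1 (y / p), f ω m := by
  rw [Finset.mul_sum]
  refine Finset.sum_congr rfl fun m hm => hf.mul_of_coprime ω ?_
  obtain ⟨hm0, hmy⟩ := Finset.mem_Icc.1 hm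
  exact Nat.coprime_of_lt_prime (Nat.one_le_iff_ne_zero.1 hm0)
    (hmy.trans_lt (div_lt_of_sqrt_lt hy)) hp

lemma ae_prime [IsProbabilityMeasure μ] (hf : IsRademacherRMF μ f) {p : ℕ} (hp : p.Prime) :
    ∀ᵐ ω ∂μ, f ω p = 1 ∨ f ω p = -1 := by
  have hmeas (c : ℝ) : MeasurableSet {ω | f ω p = c} := hf.meas p (measurableSet_singleton c)
  have hdisj : Disjoint {ω | f ω p = 1} {ω | f ω p = -1} :=
    Set.disjoint_left.2 fun ω (h₁ : f ω p = 1) (h₂ : f ω p = -1) => by linarith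
  refine (prob_compl_eq_zero_iff ((hmeas 1).union (hmeas (-1)))).2 ?_
  rw [measure_union hdisj (hmeas _), hf.prob_one p hp, hf.prob_neg_one p hp, ENNReal.add_halves]

lemma ae_sq_eq_one [IsProbabilityMeasure μ] (hf : IsRademacherRMF μ f) :
    ∀ᵐ ω ∂μ, ∀ n, Squarefree n → f ω n ^ 2 = 1 := by
  filter_upwards [ae_all_iff.2 fun p : Nat.Primes => hf.ae_prime p.2] with ω hω n hn
  rw [hf.eq_prod_of_squarefree ω n hn, ← Finset.prod_pow]
  exact Finset.prod_eq_one fun p hp => sq_eq_one_iff.2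
    (hω ⟨p, Nat.prime_of_mem_primeFactors hp⟩)

lemma memLp [IsProbabilityMeasure μ] (hf : IsRademacherRMF μ f) (n : ℕ) (p : ENNReal) :
    MemLp (fun ω => f ω n) p μ := by
  refine .of_bound (hf.meas n).aestronglyMeasurable 1 ?_
  filter_upwards [hf.ae_sq_eq_one] with ω hω
  by_cases hn : Squarefree n
  · exact (sq_le_one_iff_abs_le_one _).1 (hω n hn).le
  · simp [hf.eq_zero_of_not_squarefree ω n hn]

lemma integral_prime [IsProbabilityMeasure μ] (hf : IsRademacherRMF μ f) {p : ℕ} (hp : p.Prime) :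
    ∫ ω, f ω p ∂μ = 0 := by
  have hmeas (c : ℝ) : MeasurableSet {ω | f ω p = c} := hf.meas p (measurableSet_singleton c)
  calc ∫ ω, f ω p ∂μ
      = ∫ ω, {ω | f ω p = 1}.indicator 1 ω - {ω | f ω p = -1}.indicator 1 ω ∂μ := by
        refine integral_congr_ae ?_
        filter_upwards [hf.ae_prime hp] with ω hω
        rcases hω with h | h <;> norm_num [Set.indicator, h]
    _ = μ.real {ω | f ω p = 1} - μ.real {ω | f ω p = -1} := by
        rw [integral_sub ((integrable_const 1).indicator (hmeas 1))
          ((integrable_const 1).indicator (hmeas (-1))), integral_indicator_one (hmeas 1),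
          integral_indicator_one (hmeas (-1))]
    _ = 0 := by
        rw [measureReal_def, measureReal_def, hf.prob_one p hp, hf.prob_neg_one p hp, sub_self]

end Multiplicative

section Moments

variable [IsProbabilityMeasure μ]

lemma integral_eq_zero (hf : IsRademacherRMF μ f) {n : ℕ} (hn : n ≠ 1) : ∫ ω, f ω n ∂μ = 0 := by
  by_cases hsq : Squarefree n
  · let toPrimes (p : n.primeFactors) : Nat.Primes := ⟨p, Nat.prime_of_mem_primeFactors p.2⟩
    have htoPrimes : Function.Injective toPrimes := fun p q h =>
      Subtype.ext (congrArg (fun q : Nat.Primes => (q : ℕ)) h)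
    obtain ⟨p, hp, hpn⟩ := Nat.exists_prime_and_dvd hn
    calc ∫ ω, f ω n ∂μ
        = ∫ ω, ∏ p : n.primeFactors, f ω (toPrimes p) ∂μ := by
          refine integral_congr_ae (ae_of_all _ fun ω => ?_)
          exact (hf.eq_prod_of_squarefree ω n hsq).trans (Finset.prod_coe_sort _ (f ω)).symm
      _ = ∏ p : n.primeFactors, ∫ ω, f ω (toPrimes p) ∂μ :=
          (hf.indep.precomp htoPrimes).integral_fun_prod_eq_prod_integral
            fun p => (hf.meas p).aestronglyMeasurable
      _ = 0 := Finset.prod_eq_zero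
          (Finset.mem_univ ⟨p, hp.mem_primeFactors hpn hsq.ne_zero⟩) (hf.integral_prime hp)
  · simp only [hf.eq_zero_of_not_squarefree _ n hsq, integral_zero]

lemma ae_mul_eq_reducedMul (hf : IsRademacherRMF μ f) {a b : ℕ} (ha : Squarefree a)
    (hb : Squarefree b) : ∀ᵐ ω ∂μ, f ω a * f ω b = f ω (reducedMul a b) := by
  filter_upwards [hf.ae_sq_eq_one] with ω hω
  have split {n : ℕ} (hn : Squarefree n) (hdvd : a.gcd b ∣ n) :
      f ω n = f ω (a.gcd b) * f ω (n / a.gcd b) := by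
    have hmul := Nat.mul_div_cancel' hdvd
    rw [← hf.mul_of_coprime ω (Nat.coprime_of_squarefree_mul (hmul.symm ▸ hn)), hmul]
  have hgcd : f ω (a.gcd b) ^ 2 = 1 := hω _ (ha.squarefree_of_dvd (Nat.gcd_dvd_left a b))
  calc f ω a * f ω b
      = f ω (a.gcd b) ^ 2 * (f ω (a / a.gcd b) * f ω (b / a.gcd b)) := by
        rw [split ha (Nat.gcd_dvd_left a b), split hb (Nat.gcd_dvd_right a b)]; ring
    _ = f ω (reducedMul a b) := by
        rw [hgcd, one_mul, reducedMul, hf.mul_of_coprime ω (Nat.coprime_div_gcd_div_gcd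
          (Nat.gcd_pos_of_pos_left b ha.ne_zero.bot_lt))]

lemma integral_mul_eq_ite (hf : IsRademacherRMF μ f) {u v : ℕ} (hu : Squarefree u)
    (hv : Squarefree v) : ∫ ω, f ω u * f ω v ∂μ = if u = v then 1 else 0 := by
  split_ifs with huv
  · subst huv
    calc ∫ ω, f ω u * f ω u ∂μ = ∫ _, 1 ∂μ := by
          refine integral_congr_ae ?_
          filter_upwards [hf.ae_sq_eq_one] with ω hω
          rw [← sq, hω u hu]
      _ = 1 := by simp
  · rw [integral_congr_ae (hf.ae_mul_eq_reducedMul hu hv)]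
    exact hf.integral_eq_zero (mt eq_of_reducedMul_eq_one huv)

lemma integral_mul_mul_mul_le (hf : IsRademacherRMF μ f) (a b c d : ℕ) :
    ∫ ω, f ω a * f ω b * (f ω c * f ω d) ∂μ ≤
      if reducedMul a b = reducedMul c d then 1 else 0 := by
  by_cases h : (Squarefree a ∧ Squarefree b) ∧ Squarefree c ∧ Squarefree d
  · obtain ⟨⟨ha, hb⟩, hc, hd⟩ := h
    rw [← hf.integral_mul_eq_ite (squarefree_reducedMul ha hb) (squarefree_reducedMul hc hd)]
    refine (integral_congr_ae ?_).le
    filter_upwards [hf.ae_mul_eq_reducedMul ha hb, hf.ae_mul_eq_reducedMul hc hd] with ω hab hcd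
    rw [hab, hcd]
  · have hzero (ω : Ω) : f ω a * f ω b * (f ω c * f ω d) = 0 := by
      by_contra hne
      simp only [mul_ne_zero_iff] at hne
      exact h (hne.imp (.imp hf.squarefree_of_ne_zero hf.squarefree_of_ne_zero)
        (.imp hf.squarefree_of_ne_zero hf.squarefree_of_ne_zero))
    simp only [hzero, integral_zero]
    split_ifs <;> norm_num

lemma integral_sum_pow_four_le (hf : IsRademacherRMF μ f) (N : ℕ) :
    ∫ ω, (∑ m ∈ Finset.Icc 1 N, f ω m) ^ 4 ∂μ ≤ (4 * N * (1 + Real.log N)) ^ 2 := by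
  set I := Finset.Icc 1 N
  have hexpand (ω : Ω) : (∑ m ∈ I, f ω m) ^ 4 =
      ∑ t ∈ (I ×ˢ I) ×ˢ (I ×ˢ I), f ω t.1.1 * f ω t.1.2 * (f ω t.2.1 * f ω t.2.2) := by
    simp only [Finset.sum_product, ← Finset.mul_sum, ← Finset.sum_mul]
    ring
  calc ∫ ω, (∑ m ∈ I, f ω m) ^ 4 ∂μ
      = ∑ t ∈ (I ×ˢ I) ×ˢ (I ×ˢ I),
          ∫ ω, f ω t.1.1 * f ω t.1.2 * (f ω t.2.1 * f ω t.2.2) ∂μ := by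
        simp only [hexpand]
        exact integral_finsetSum _ fun t _ => integrable_mul_mul_mul_of_memLp_four
          (hf.memLp _ 4) (hf.memLp _ 4) (hf.memLp _ 4) (hf.memLp _ 4)
    _ ≤ ∑ t ∈ (I ×ˢ I) ×ˢ (I ×ˢ I),
          (if reducedMul t.1.1 t.1.2 = reducedMul t.2.1 t.2.2 then 1 else 0) :=
        Finset.sum_le_sum fun t _ => hf.integral_mul_mul_mul_le _ _ _ _
    _ = ((squareQuadruples N).card : ℝ) := Finset.sum_boole _ _
    _ ≤ (4 * N * (1 + Real.log N)) ^ 2 := card_squareQuadruples_le N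

end Moments

section Martingale

/-- The filtration generated by the values of `f` at the primes: `k ↦ σ(f q : q ≤ k prime)`. -/
def primeFiltration (hf : IsRademacherRMF μ f) : Filtration ℕ m₀ where
  seq k := ⨆ q ∈ {q : Nat.Primes | (q : ℕ) ≤ k},
    MeasurableSpace.comap (fun ω => f ω q) inferInstance
  mono' _ _ hij := biSup_mono fun _ hq => le_trans hq hij
  le' _ := iSup₂_le fun q _ => (hf.meas q).comap_le

lemma measurable_primeFiltration (hf : IsRademacherRMF μ f) {n k : ℕ} (h : Pfac n ≤ k) :
    Measurable[hf.primeFiltration k] fun ω => f ω n := by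
  by_cases hn : Squarefree n
  · simp only [hf.eq_prod_of_squarefree _ n hn]
    refine Finset.measurable_fun_prod _ fun p hp => measurable_iff_comap_le.2 ?_
    exact le_biSup (fun q : Nat.Primes => MeasurableSpace.comap (fun ω => f ω q) inferInstance)
      (i := ⟨p, Nat.prime_of_mem_primeFactors hp⟩)
      (show p ≤ k from (le_Pfac_of_mem_primeFactors hp).trans h)
  · simp only [hf.eq_zero_of_not_squarefree _ n hn]
    exact measurable_const

lemma condExp_prime [IsProbabilityMeasure μ] (hf : IsRademacherRMF μ f) {p k : ℕ} (hp : p.Prime)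
    (hk : k < p) : μ[fun ω => f ω p | hf.primeFiltration k] =ᵐ[μ] 0 := by
  have hindep : Indep (MeasurableSpace.comap (fun ω => f ω p) inferInstance)
      (hf.primeFiltration k) μ := by
    have hdisj : Disjoint {(⟨p, hp⟩ : Nat.Primes)} {q : Nat.Primes | (q : ℕ) ≤ k} :=
      Set.disjoint_singleton_left.2 hk.not_ge
    exact indep_of_indep_of_le_left (indep_iSup_of_disjoint
      (m := fun q : Nat.Primes => MeasurableSpace.comap (fun ω => f ω q) inferInstance)
      (fun q => (hf.meas q).comap_le) hf.indep.iIndep hdisj)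
      (le_biSup (fun q : Nat.Primes => MeasurableSpace.comap (fun ω => f ω q) inferInstance)
        (Set.mem_singleton ⟨p, hp⟩))
  have hmeas : Measurable[MeasurableSpace.comap (fun ω => f ω p) inferInstance] fun ω => f ω p :=
    comap_measurable _
  filter_upwards [condExp_indep_eq (hf.meas p).comap_le (hf.primeFiltration.le k)
    hmeas.stronglyMeasurable hindep] with ω hω
  rw [hω, hf.integral_prime hp, Pi.zero_apply]

variable [IsProbabilityMeasure μ]

lemma memLp_largePrimeSum (hf : IsRademacherRMF μ f) (y k : ℕ) (p : ENNReal) :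
    MemLp (fun ω => largePrimeSum (f ω) y k) p μ :=
  memLp_finsetSum _ fun n _ => hf.memLp n p

lemma martingale_largePrimeSum (hf : IsRademacherRMF μ f) (y : ℕ) :
    Martingale (fun k ω => largePrimeSum (f ω) y k) hf.primeFiltration μ := by
  have hint (k : ℕ) : Integrable (fun ω => largePrimeSum (f ω) y k) μ :=
    memLp_one_iff_integrable.1 (hf.memLp_largePrimeSum y k 1)
  refine martingale_of_condExp_sub_eq_zero_nat (fun k => ?_) hint fun k => ?_
  · exact (Finset.measurable_fun_sum _ fun n hn => hf.measurable_primeFiltration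
      (Finset.mem_filter.1 hn).2.2).stronglyMeasurable
  by_cases hk : y.sqrt < k + 1 ∧ (k + 1).Prime
  · have hincr : (fun ω => largePrimeSum (f ω) y (k + 1)) - (fun ω => largePrimeSum (f ω) y k) =
        (fun ω => ∑ m ∈ Finset.Icc 1 (y / (k + 1)), f ω m) * fun ω => f ω (k + 1) := by
      funext ω
      simp only [Pi.sub_apply, Pi.mul_apply]
      rw [largePrimeSum_succ_of_prime _ hk.2 hk.1, hf.sum_mul_of_sqrt_lt ω hk.2 hk.1, mul_comm]
    have hmeas : StronglyMeasurable[hf.primeFiltration k]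
        fun ω => ∑ m ∈ Finset.Icc 1 (y / (k + 1)), f ω m := by
      refine (Finset.measurable_fun_sum _ fun m hm =>
        hf.measurable_primeFiltration ?_).stronglyMeasurable
      obtain ⟨hm0, hmy⟩ := Finset.mem_Icc.1 hm
      exact (Pfac_le_self hm0).trans
        (Nat.lt_succ_iff.1 (hmy.trans_lt (div_lt_of_sqrt_lt hk.1)))
    filter_upwards [condExp_mul_of_stronglyMeasurable_left hmeas
      (hincr ▸ (hint (k + 1)).sub (hint k)) (memLp_one_iff_integrable.1 (hf.memLp (k + 1) 1)),
      hf.condExp_prime hk.2 k.lt_succ_self] with ω hpull hzero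
    rw [hincr, hpull, Pi.mul_apply, hzero, Pi.zero_apply, mul_zero]
  · have hincr : (fun ω => largePrimeSum (f ω) y (k + 1)) -
        (fun ω => largePrimeSum (f ω) y k) = 0 :=
      funext fun ω => largePrimeSum_succ_of_not_prime (f ω) hk
    rw [hincr, condExp_zero]

lemma integral_largePrimeSum_succ_sub_pow_four_le (hf : IsRademacherRMF μ f) (y k : ℕ) :
    ∫ ω, (largePrimeSum (f ω) y (k + 1) - largePrimeSum (f ω) y k) ^ 4 ∂μ ≤
      (if y.sqrt ≤ k then 4 * √y * (1 + Real.log y) else 0) ^ 2 := by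
  by_cases hk : y.sqrt < k + 1 ∧ (k + 1).Prime
  · rw [if_pos (Nat.lt_succ_iff.1 hk.1)]
    have hdiv : ((y / (k + 1) : ℕ) : ℝ) ≤ √y := by
      refine (Nat.cast_le.2 (Nat.lt_succ_iff.1 ?_)).trans Real.nat_sqrt_le_real_sqrt
      exact Nat.div_lt_of_lt_mul ((Nat.lt_succ_sqrt y).trans_le (Nat.mul_le_mul_right _ hk.1))
    have hlog : Real.log (y / (k + 1) : ℕ) ≤ Real.log y := by
      rcases (y / (k + 1)).eq_zero_or_pos with h0 | hpos
      · simpa only [h0, Nat.cast_zero, Real.log_zero] using Real.log_natCast_nonneg y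
      · exact Real.log_le_log (Nat.cast_pos.2 hpos) (Nat.cast_le.2 (Nat.div_le_self y (k + 1)))
    calc ∫ ω, (largePrimeSum (f ω) y (k + 1) - largePrimeSum (f ω) y k) ^ 4 ∂μ
        = ∫ ω, (∑ m ∈ Finset.Icc 1 (y / (k + 1)), f ω m) ^ 4 ∂μ := by
          refine integral_congr_ae ?_
          filter_upwards [hf.ae_sq_eq_one] with ω hω
          rw [largePrimeSum_succ_of_prime _ hk.2 hk.1, hf.sum_mul_of_sqrt_lt ω hk.2 hk.1, mul_pow,
            show 4 = 2 * 2 from rfl, pow_mul (f ω (k + 1)), hω _ hk.2.squarefree, one_pow, one_mul]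
      _ ≤ (4 * (y / (k + 1) : ℕ) * (1 + Real.log (y / (k + 1) : ℕ))) ^ 2 :=
          hf.integral_sum_pow_four_le _
      _ ≤ (4 * √y * (1 + Real.log y)) ^ 2 := by
          have := Real.log_natCast_nonneg (y / (k + 1))
          gcongr
  · simp only [largePrimeSum_succ_of_not_prime _ hk, ne_eq, OfNat.ofNat_ne_zero, not_false_eq_true,
      zero_pow, integral_zero]
    positivity

lemma measure_exists_le_abs_largePrimeSum_le (hf : IsRademacherRMF μ f) (y N : ℕ) {r : ℝ}
    (hr : 0 < r) :
    μ {ω | ∃ k ≤ N, r ≤ |largePrimeSum (f ω) y k|} ≤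
      ENNReal.ofReal ((16 * √y * (1 + Real.log y) * (N - y.sqrt : ℕ)) ^ 2 / r ^ 4) := by
  have hmart := hf.martingale_largePrimeSum y
  have hmem (k : ℕ) := hf.memLp_largePrimeSum y k 4
  have hint (k : ℕ) : Integrable (fun ω => largePrimeSum (f ω) y k ^ 4) μ :=
    (integrable_mul_mul_mul_of_memLp_four (hmem k) (hmem k) (hmem k) (hmem k)).congr
      (ae_of_all _ fun ω => by ring)
  refine (measure_exists_le_abs_martingale_le hmart (by decide) hint hr N).trans
    (ENNReal.ofReal_le_ofReal ?_)
  gcongr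
  have hcount : ∑ k ∈ Finset.range N, (if y.sqrt ≤ k then 4 * √y * (1 + Real.log y) else 0) =
      (N - y.sqrt : ℕ) * (4 * √y * (1 + Real.log y)) := by
    rw [← Finset.sum_filter, Finset.sum_const, nsmul_eq_mul, ← Nat.card_Ico]
    congr 3
    ext k
    simp only [Finset.mem_filter, Finset.mem_range, Finset.mem_Ico]
    lia
  have h4 := integral_martingale_pow_four_le hmart hmem
    (funext fun ω => largePrimeSum_zero (f ω) y)
    (fun k => by have := Real.log_natCast_nonneg y; split_ifs <;> positivity)
    (hf.integral_largePrimeSum_succ_sub_pow_four_le y) N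
  exact h4.trans_eq (by rw [hcount]; ring)

end Martingale

end IsRademacherRMF

section TestPoints

open Filter Real

variable {ε : ℝ}

lemma testPoint_le_exp (ε : ℝ) (j : ℕ) : (testPoint ε j : ℝ) ≤ exp ((j : ℝ) ^ ε) :=
  Nat.floor_le (exp_pos _).le

lemma tendsto_testPoint_atTop (hε : 0 < ε) :
    Tendsto (fun j => (testPoint ε j : ℝ)) atTop atTop :=
  tendsto_natCast_atTop_atTop.comp <| tendsto_nat_floor_atTop.comp <|
    tendsto_exp_atTop.comp <| (tendsto_rpow_atTop hε).comp tendsto_natCast_atTop_atTop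

lemma eventually_one_le_Rbd (hε : 0 ≤ 1 / 4 + ε) : ∀ᶠ x in atTop, 1 ≤ Rbd ε x := by
  filter_upwards [(tendsto_log_atTop.comp tendsto_log_atTop).eventually_ge_atTop 1] with x hx
  exact one_le_rpow hx hε

lemma add_one_rpow_le (hε₀ : 0 ≤ ε) (hε₁ : ε ≤ 1) {x : ℝ} (hx : 0 < x) :
    (x + 1) ^ ε ≤ x ^ ε + ε * x ^ (ε - 1) := by
  have hinv : 0 ≤ 1 / x := by positivity
  calc (x + 1) ^ ε = x ^ ε * (1 + 1 / x) ^ ε := by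
        rw [← mul_rpow hx.le (by positivity)]
        congr 1
        field_simp
    _ ≤ x ^ ε * (1 + ε * (1 / x)) := by
        gcongr
        exact rpow_one_add_le_one_add_mul_self (by linarith) hε₀ hε₁
    _ = x ^ ε + ε * x ^ (ε - 1) := by rw [rpow_sub_one hx.ne']; ring

lemma eventually_one_le_exp_half_rpow_mul_rpow (hε : 0 < ε) :
    ∀ᶠ x : ℝ in atTop, 1 ≤ exp (x ^ ε / 2) * x ^ (ε - 1) := by
  have hexp := (tendsto_rpow_atTop hε).eventually
    ((isLittleO_rpow_exp_pos_mul_atTop ((1 - ε) / ε) one_half_pos).bound one_pos)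
  filter_upwards [hexp, eventually_gt_atTop 0] with x hx hx₀
  rw [← rpow_mul hx₀.le, mul_div_cancel₀ _ hε.ne', one_mul, norm_of_nonneg (by positivity),
    norm_of_nonneg (by positivity), one_div_mul_eq_div] at hx
  calc 1 = x ^ (1 - ε) * x ^ (ε - 1) := by
        rw [← rpow_add hx₀, sub_add_sub_cancel, sub_self, rpow_zero]
    _ ≤ exp (x ^ ε / 2) * x ^ (ε - 1) := by gcongr

lemma natSqrt_sub_natSqrt_le {m n : ℕ} (h : m ≤ n) :
    ((n.sqrt - m.sqrt : ℕ) : ℝ) ≤ √n - √m + 1 := by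
  rw [Nat.cast_sub (Nat.sqrt_le_sqrt h)]
  linarith [nat_sqrt_le_real_sqrt (a := n), real_sqrt_le_nat_sqrt_succ (a := m)]

lemma natSqrt_floor_exp_sub_div_le {t δ : ℝ} (ht : 1 ≤ t) (hδ₀ : 0 ≤ δ) (hδ₁ : δ ≤ 1)
    (h : 1 ≤ exp (t / 2) * δ) :
    ((⌊exp (t + δ)⌋₊.sqrt - ⌊exp t⌋₊.sqrt : ℕ) : ℝ) / √⌊exp t⌋₊ ≤ 6 * δ := by
  have hsq : exp t = exp (t / 2) ^ 2 := by rw [← exp_nat_mul]; ring_nf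
  have hfloor : exp t - 1 ≤ ⌊exp t⌋₊ := (Nat.sub_one_lt_floor _).le
  have htwo : 2 ≤ exp t := by linarith [add_one_le_exp t]
  have hupper : √⌊exp (t + δ)⌋₊ ≤ exp (t / 2) * (1 + δ) := by
    have hexp := (abs_le.1 (abs_exp_sub_one_le (x := δ / 2)
      (by rw [abs_of_nonneg] <;> linarith))).2
    rw [abs_of_nonneg (by linarith)] at hexp
    calc √⌊exp (t + δ)⌋₊ ≤ √(exp (t + δ)) := sqrt_le_sqrt (Nat.floor_le (exp_pos _).le)
      _ = exp (t / 2) * exp (δ / 2) := by rw [← exp_half, add_div, exp_add]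
      _ ≤ exp (t / 2) * (1 + δ) := by gcongr; linarith
  have hone : 1 ≤ exp (t / 2) := one_le_exp (by linarith)
  have hlower : exp (t / 2) - 1 ≤ √⌊exp t⌋₊ := le_sqrt_of_sq_le (by nlinarith)
  have hhalf : exp (t / 2) / 2 ≤ √⌊exp t⌋₊ := le_sqrt_of_sq_le (by nlinarith)
  have hcount := natSqrt_sub_natSqrt_le
    (Nat.floor_mono (exp_le_exp.2 (le_add_of_nonneg_right hδ₀ : t ≤ t + δ)))
  rw [div_le_iff₀ (by linarith)]
  nlinarith

lemma eventually_natSqrt_testPoint_sub_div_le (hε₀ : 0 < ε) (hε₁ : ε ≤ 1) :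
    ∀ᶠ j : ℕ in atTop,
      (((testPoint ε (j + 1)).sqrt - (testPoint ε j).sqrt : ℕ) : ℝ) / √(testPoint ε j) ≤
        6 * (j : ℝ) ^ (ε - 1) := by
  filter_upwards [eventually_ge_atTop 1, tendsto_natCast_atTop_atTop.eventually
    (eventually_one_le_exp_half_rpow_mul_rpow hε₀)] with j hj hexp
  have hj₁ : (1 : ℝ) ≤ j := Nat.one_le_cast.2 hj
  have hnext : testPoint ε (j + 1) ≤ ⌊exp ((j : ℝ) ^ ε + (j : ℝ) ^ (ε - 1))⌋₊ := by
    refine Nat.floor_mono (exp_le_exp.2 ?_)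
    rw [Nat.cast_succ]
    refine (add_one_rpow_le hε₀.le hε₁ (by linarith)).trans ?_
    gcongr
    exact mul_le_of_le_one_left (by positivity) hε₁
  calc (((testPoint ε (j + 1)).sqrt - (testPoint ε j).sqrt : ℕ) : ℝ) / √(testPoint ε j)
      ≤ ((⌊exp ((j : ℝ) ^ ε + (j : ℝ) ^ (ε - 1))⌋₊.sqrt - (testPoint ε j).sqrt : ℕ) : ℝ) /
          √(testPoint ε j) := by gcongr
    _ ≤ 6 * (j : ℝ) ^ (ε - 1) :=
        natSqrt_floor_exp_sub_div_le (one_le_rpow hj₁ hε₀.le) (by positivity)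
          (rpow_le_one_of_one_le_of_nonpos hj₁ (by linarith)) hexp

lemma eventually_one_add_log_testPoint_le (hε : 0 < ε) :
    ∀ᶠ j : ℕ in atTop, 1 + log (testPoint ε j) ≤ 2 * (j : ℝ) ^ ε := by
  filter_upwards [eventually_ge_atTop 1, (tendsto_testPoint_atTop hε).eventually_gt_atTop 0]
    with j hj hy
  have hone : 1 ≤ (j : ℝ) ^ ε := one_le_rpow (Nat.one_le_cast.2 hj) hε.le
  have hlog : log (testPoint ε j) ≤ (j : ℝ) ^ ε :=
    (log_le_iff_le_exp hy).2 (testPoint_le_exp ε j)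
  linarith

/-- The real index `i` at which the test points reach `X_s`, that is, the solution of
`exp (i ^ ε) = X_s`. -/
def indexCutoff (ε s : ℝ) : ℝ := 2 ^ (s ^ (1 / (4 * ε)) / ε)

lemma indexCutoff_lt_of_Xpt_lt_testPoint (hε : 0 < ε) {s : ℝ} {j : ℕ}
    (h : Xpt ε s < testPoint ε j) : indexCutoff ε s < j := by
  have hexp : (2 : ℝ) ^ s ^ (1 / (4 * ε)) < (j : ℝ) ^ ε :=
    exp_lt_exp.1 (h.trans_le (testPoint_le_exp ε j))
  rw [indexCutoff, ← rpow_lt_rpow_iff (rpow_nonneg zero_le_two _) j.cast_nonneg hε,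
    ← rpow_mul zero_le_two, div_mul_cancel₀ _ hε.ne']
  exact hexp

lemma tendsto_indexCutoff_atTop (hε : 0 < ε) : Tendsto (indexCutoff ε) atTop atTop :=
  (tendsto_rpow_atTop_of_base_gt_one 2 one_lt_two).comp
    ((tendsto_rpow_atTop (by positivity)).atTop_div_const hε)

lemma indexCutoff_rpow_neg (ε s b : ℝ) :
    indexCutoff ε s ^ (-b) = 2 ^ (-(s ^ (1 / (4 * ε)) * b / ε)) := by
  rw [indexCutoff, ← rpow_mul zero_le_two]
  congr 1
  ring

end TestPoints

section TailSum

lemma sum_range_add_succ_rpow_le {b : ℝ} (hb : 0 < b) {m : ℕ} (hm : 0 < m) (k : ℕ) :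
    ∑ i ∈ Finset.range k, ((m + (i + 1) : ℕ) : ℝ) ^ (-b - 1) ≤ (m : ℝ) ^ (-b) / b := by
  have hm₀ : (0 : ℝ) < m := Nat.cast_pos.2 hm
  have hanti : AntitoneOn (fun x : ℝ => x ^ (-b - 1)) (Set.Icc m (m + k)) :=
    fun x hx _ _ hxy =>
      Real.rpow_le_rpow_of_nonpos (hm₀.trans_le hx.1) hxy (by linarith)
  have hzero : (0 : ℝ) ∉ Set.uIcc (m : ℝ) (m + k) := by
    rw [Set.uIcc_of_le (by linarith [k.cast_nonneg (α := ℝ)])]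
    exact fun h => h.1.not_gt hm₀
  calc ∑ i ∈ Finset.range k, ((m + (i + 1) : ℕ) : ℝ) ^ (-b - 1)
      = ∑ i ∈ Finset.range k, ((m : ℝ) + (i + 1 : ℕ)) ^ (-b - 1) := by simp only [Nat.cast_add]
    _ ≤ ∫ x in (m : ℝ)..m + k, x ^ (-b - 1) := hanti.sum_le_integral
    _ = ((m : ℝ) ^ (-b) - (m + k : ℝ) ^ (-b)) / b := by
        rw [integral_rpow (.inr ⟨by linarith, hzero⟩), sub_add_cancel, div_neg, ← neg_div, neg_sub]
    _ ≤ (m : ℝ) ^ (-b) / b := by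
        gcongr
        exact sub_le_self _ (by positivity)

lemma natFloor_rpow_neg_le {b x : ℝ} (hb : 0 ≤ b) (hx : 1 ≤ x) :
    (⌊x⌋₊ : ℝ) ^ (-b) ≤ 2 ^ b * x ^ (-b) := by
  calc (⌊x⌋₊ : ℝ) ^ (-b) ≤ (x / 2) ^ (-b) :=
        Real.rpow_le_rpow_of_nonpos (by linarith) (Nat.div_two_lt_floor hx).le (by linarith)
    _ = 2 ^ b * x ^ (-b) := by
        rw [Real.div_rpow (by linarith) zero_le_two, Real.rpow_neg zero_le_two, div_inv_eq_mul,
          mul_comm]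

lemma measure_iUnion_lt_le {Ω : Type*} [MeasurableSpace Ω] {μ : Measure Ω} {E : ℕ → Set Ω}
    {b c J : ℝ} (hb : 0 < b) (hc : 0 ≤ c) (hJ : 1 ≤ J)
    (hE : ∀ j : ℕ, J < j → μ (E j) ≤ ENNReal.ofReal (c * (j : ℝ) ^ (-b - 1))) :
    μ (⋃ (j : ℕ) (_ : J < j), E j) ≤ ENNReal.ofReal (c * (2 ^ b / b) * J ^ (-b)) := by
  set m := ⌊J⌋₊
  have hm : 0 < m := Nat.floor_pos.2 hJ
  have hsub : ⋃ (j : ℕ) (_ : J < j), E j ⊆ ⋃ i : ℕ, E (m + (i + 1)) := by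
    refine Set.iUnion₂_subset fun j hj => ?_
    obtain ⟨i, rfl⟩ := Nat.exists_eq_add_of_lt ((Nat.floor_lt (by linarith)).2 hj)
    exact Set.subset_iUnion (fun i => E (m + (i + 1))) i
  refine (measure_mono hsub).trans ((measure_iUnion_le _).trans ?_)
  refine ENNReal.tsum_le_of_sum_range_le fun k => ?_
  calc ∑ i ∈ Finset.range k, μ (E (m + (i + 1)))
      ≤ ∑ i ∈ Finset.range k, ENNReal.ofReal (c * ((m + (i + 1) : ℕ) : ℝ) ^ (-b - 1)) :=
        Finset.sum_le_sum fun i _ => hE _ (Nat.lt_of_floor_lt (by lia))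
    _ = ENNReal.ofReal (c * ∑ i ∈ Finset.range k, ((m + (i + 1) : ℕ) : ℝ) ^ (-b - 1)) := by
        rw [Finset.mul_sum, ENNReal.ofReal_sum_of_nonneg fun i _ => by positivity]
    _ ≤ ENNReal.ofReal (c * ((m : ℝ) ^ (-b) / b)) := by
        gcongr
        exact sum_range_add_succ_rpow_le hb hm k
    _ ≤ ENNReal.ofReal (c * (2 ^ b * J ^ (-b) / b)) := by
        gcongr
        exact natFloor_rpow_neg_le hb.le hJ
    _ = ENNReal.ofReal (c * (2 ^ b / b) * J ^ (-b)) := by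
        congr 1
        ring

end TailSum

section Exceedance

variable {Ω : Type*} {f : Ω → ℕ → ℝ} {ε : ℝ}

/-- The part of the event `𝓒_ℓ` contributed by a single index `i`, with `j = i - 1`: some
`x_j < x ≤ x_{j+1}` violates the bound `2 √x_j R(x_j)`. -/
def exceedanceEvent (f : Ω → ℕ → ℝ) (ε : ℝ) (j : ℕ) : Set Ω :=
  {ω | ∃ x : ℝ, (testPoint ε j : ℝ) < x ∧ x ≤ (testPoint ε (j + 1) : ℝ) ∧
    2 * (√(testPoint ε j) * Rbd ε (testPoint ε j)) <
      |∑ n ∈ (Finset.Icc 1 (testPoint ε j)).filter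
        (fun n : ℕ => √(testPoint ε j) < (Pfac n : ℝ) ∧ (Pfac n : ℝ) ≤ √x), f ω n|}

lemma exceedanceEvent_subset {j : ℕ} (hR : 1 ≤ Rbd ε (testPoint ε j)) :
    exceedanceEvent f ε j ⊆ {ω | ∃ k ≤ (testPoint ε (j + 1)).sqrt,
      √(testPoint ε j) ≤ |largePrimeSum (f ω) (testPoint ε j) k|} := by
  rintro ω ⟨x, -, hxy, hlt⟩
  rw [sum_filter_sqrt_eq_largePrimeSum] at hlt
  refine ⟨⌊√x⌋₊, ?_, le_trans ?_ hlt.le⟩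
  · rw [← Real.nat_floor_real_sqrt_eq_nat_sqrt]
    exact Nat.floor_mono (Real.sqrt_le_sqrt hxy)
  · nlinarith [Real.sqrt_nonneg (testPoint ε j)]

lemma IsRademacherRMF.eventually_measure_exceedanceEvent_le [MeasurableSpace Ω] {μ : Measure Ω}
    [IsProbabilityMeasure μ] (hf : IsRademacherRMF μ f) (hε₀ : 0 < ε) (hε₁ : ε ≤ 1) :
    ∀ᶠ j : ℕ in Filter.atTop, μ (exceedanceEvent f ε j) ≤
      ENNReal.ofReal (192 ^ 2 * (j : ℝ) ^ (-(1 - 4 * ε) - 1)) := by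
  have hlarge := tendsto_testPoint_atTop hε₀
  filter_upwards [Filter.eventually_gt_atTop 0, hlarge.eventually_gt_atTop 0,
    hlarge.eventually (eventually_one_le_Rbd (ε := ε) (by linarith)),
    eventually_natSqrt_testPoint_sub_div_le hε₀ hε₁,
    eventually_one_add_log_testPoint_le hε₀] with j hj hy hR hcount hlog
  set y := testPoint ε j
  set n := (testPoint ε (j + 1)).sqrt - y.sqrt
  have hsqrt : 0 < √(y : ℝ) := Real.sqrt_pos.2 hy
  have := Real.log_natCast_nonneg y
  have hj₀ : (0 : ℝ) < j := Nat.cast_pos.2 hj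
  refine (measure_mono (exceedanceEvent_subset hR)).trans
    ((hf.measure_exists_le_abs_largePrimeSum_le y _ hsqrt).trans (ENNReal.ofReal_le_ofReal ?_))
  calc (16 * √y * (1 + Real.log y) * n) ^ 2 / √(y : ℝ) ^ 4
      = (16 * (1 + Real.log y) * (n / √y)) ^ 2 := by field_simp
    _ ≤ (16 * (2 * (j : ℝ) ^ ε) * (6 * (j : ℝ) ^ (ε - 1))) ^ 2 := by gcongr
    _ = 192 ^ 2 * ((j : ℝ) ^ ε * (j : ℝ) ^ (ε - 1)) ^ (2 : ℝ) := by rw [Real.rpow_two]; ring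
    _ = 192 ^ 2 * (j : ℝ) ^ (-(1 - 4 * ε) - 1) := by
        rw [← Real.rpow_add hj₀, ← Real.rpow_mul hj₀.le]
        ring_nf

end Exceedance

/-- For `0 < ε < 1/4` and sufficiently large `ℓ`,
`ℙ(𝓒_ℓ) ≪_ε 2^{-(ℓ-1)^K (1-4ε)/ε}`. -/
theorem event_C_rademacher
    {Ω : Type*} [MeasurableSpace Ω] (μ : Measure Ω) [IsProbabilityMeasure μ]
    (f : Ω → ℕ → ℝ) (hf : IsRademacherRMF μ f)
    (ε : ℝ) (hε : 0 < ε) (hε' : ε < 1 / 4) :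
    ∃ C : ℝ, 0 < C ∧ ∃ L : ℕ, ∀ ℓ : ℕ, L ≤ ℓ → 2 ≤ ℓ →
      μ {ω | ∃ i : ℕ, 2 ≤ i ∧
            Xpt ε ((ℓ : ℝ) - 1) < (testPoint ε (i - 1) : ℝ) ∧
            (testPoint ε (i - 1) : ℝ) ≤ Xpt ε (ℓ : ℝ) ∧
            ∃ x : ℝ, (testPoint ε (i - 1) : ℝ) < x ∧ x ≤ (testPoint ε i : ℝ) ∧
              2 * (Real.sqrt (testPoint ε (i - 1)) * Rbd ε (testPoint ε (i - 1))) <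
                |∑ n ∈ (Finset.Icc 1 (testPoint ε (i - 1))).filter
                    (fun n : ℕ => Real.sqrt (testPoint ε (i - 1)) < (Pfac n : ℝ) ∧
                      (Pfac n : ℝ) ≤ Real.sqrt x), f ω n|} ≤
        ENNReal.ofReal (C *
          (2 : ℝ) ^ (-(((ℓ : ℝ) - 1) ^ (1 / (4 * ε)) * (1 - 4 * ε) / ε))) := by
  have hb : 0 < 1 - 4 * ε := by linarith
  obtain ⟨j₀, hj₀⟩ := Filter.eventually_atTop.1
    (hf.eventually_measure_exceedanceEvent_le hε (by linarith))
  have hcutoff : Filter.Tendsto (fun ℓ : ℕ => indexCutoff ε ((ℓ : ℝ) - 1)) .atTop .atTop :=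
    (tendsto_indexCutoff_atTop hε).comp
      (Filter.tendsto_atTop_add_const_right _ (-1) tendsto_natCast_atTop_atTop)
  obtain ⟨L, hL⟩ := Filter.eventually_atTop.1 (hcutoff.eventually_ge_atTop (max 1 (j₀ : ℝ)))
  refine ⟨192 ^ 2 * (2 ^ (1 - 4 * ε) / (1 - 4 * ε)), by positivity, L, fun ℓ hℓ _ => ?_⟩
  rw [← indexCutoff_rpow_neg]
  refine (measure_mono ?_).trans (measure_iUnion_lt_le (E := exceedanceEvent f ε) hb
    (by positivity) ((le_max_left _ _).trans (hL ℓ hℓ)) fun j hj => hj₀ j ?_)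
  · rintro ω ⟨i, hi, hX, -, hexceed⟩
    obtain ⟨j, rfl⟩ := Nat.exists_eq_add_of_le' (one_le_two.trans hi)
    exact Set.mem_iUnion₂.2 ⟨j, indexCutoff_lt_of_Xpt_lt_testPoint hε hX, hexceed⟩
  · exact Nat.cast_le.1 (((le_max_right _ _).trans (hL ℓ hℓ)).trans hj.le)
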